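/- Let M be a module over ℝ, let v : List Γ → M, let p : List Γ → ℝ, and let w : List Γ have length l. Then Σ_{g ∈ Seg(w)} (Π_{s ∈ g} p(s)) • (Σ_{s ∈ g} v(s)) = Σ_{0 ≤ i < j ≤ l} (p(w[i+1:j]) · B(w.take i) · B(w.drop j)) • v(w[i+1:j]), where the inner sum Σ_{s ∈ g} v(s) runs over the entries of g with multiplicity. That is, the expectation over segmentations of the bag-of-subwords vector equals the weighted sum of subword-occurrence vectors with the weights ã computed by Algorithm 1. (Equations (6)–(8): correctness of the alternative weighted-subword view of PBoS.) -/

import Mathlib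

open scoped Classical

variable {Γ : Type*}

/-- A segmentation of a word `w` is a list of nonempty subwords whose concatenation is `w`. -/
def Seg (w : List Γ) : Set (List (List Γ)) :=
  {g | (∀ s ∈ g, s ≠ []) ∧ g.flatten = w}

theorem Seg.finite (w : List Γ) : (Seg w).Finite := by
  apply Set.Finite.subset
    (Set.finite_range fun c : Composition w.length => w.splitWrtComposition c)
  rintro g ⟨hne, hjoin⟩
  subst hjoin
  have hpos : ∀ {i : ℕ}, i ∈ g.map List.length → 0 < i := by
    intro i hi
    simp only [List.mem_map] at hi
    obtain ⟨s, hs, rfl⟩ := hi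
    exact List.length_pos_iff.mpr (hne s hs)
  refine ⟨⟨g.map List.length, hpos, by simp⟩, ?_⟩
  exact (List.splitWrtComposition_flatten g ⟨g.map List.length, hpos, by simp⟩ rfl)

/-- The (finite) set of segmentations of `w`, as a `Finset`. -/
noncomputable def SegF (w : List Γ) : Finset (List (List Γ)) := (Seg.finite w).toFinset

/-- Total segmentation weight `B(u) = Σ_{g ∈ Seg(u)} Π_{s ∈ g} p(s)`. -/
noncomputable def B (p : List Γ → ℝ) (u : List Γ) : ℝ :=
  ∑ g ∈ SegF u, (g.map p).prod

theorem mem_SegF {w : List Γ} {g : List (List Γ)} :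
    g ∈ SegF w ↔ (∀ s ∈ g, s ≠ []) ∧ g.flatten = w := by
  simp [SegF, Seg]

theorem sum_map_eq_range {M : Type*} [AddCommMonoid M] (v : List Γ → M) (g : List (List Γ)) :
    (g.map v).sum = ∑ k ∈ Finset.range g.length, v (g.getD k []) := by
  induction g with
  | nil => simp
  | cons s g ih =>
    rw [List.map_cons, List.sum_cons, List.length_cons, Finset.sum_range_succ', ih, add_comm]
    simp

theorem exists_split (g : List (List Γ)) (k : ℕ) (hk : k < g.length) :
    ∃ a s b, g = a ++ s :: b ∧ k = a.length :=
  ⟨g.take k, g[k], g.drop (k + 1), by simp, by simp; omega⟩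

/-- Equations (6)–(8): the expectation over segmentations of the bag-of-subwords
vector equals the weighted sum of subword-occurrence vectors with the weights
`ã` computed by Algorithm 1. -/
theorem pbos_weighted_subword_view {M : Type*} [AddCommMonoid M] [Module ℝ M]
    (v : List Γ → M) (p : List Γ → ℝ) (w : List Γ) :
    ∑ g ∈ SegF w, (g.map p).prod • (g.map v).sum
      = ∑ q ∈ (Finset.range (w.length + 1) ×ˢ Finset.range (w.length + 1)).filter
          (fun q => q.1 < q.2),
          (p ((w.drop q.1).take (q.2 - q.1)) * B p (w.take q.1) * B p (w.drop q.2)) •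
            v ((w.drop q.1).take (q.2 - q.1)) := by
  have hR : ∀ q : ℕ × ℕ,
      (p ((w.drop q.1).take (q.2 - q.1)) * B p (w.take q.1) * B p (w.drop q.2)) •
            v ((w.drop q.1).take (q.2 - q.1))
      = ∑ ab ∈ SegF (w.take q.1) ×ˢ SegF (w.drop q.2),
          ((ab.1 ++ ((w.drop q.1).take (q.2 - q.1)) :: ab.2).map p).prod •
            v ((w.drop q.1).take (q.2 - q.1)) := by
    intro q
    rw [← Finset.sum_smul]
    congr 1
    rw [mul_assoc, B, B, Finset.sum_mul_sum, ← Finset.sum_product', Finset.mul_sum]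
    refine Finset.sum_congr rfl fun ab _ => ?_
    simp only [List.map_append, List.map_cons, List.prod_append, List.prod_cons]
    ring
  have hL : ∀ g : List (List Γ), (g.map p).prod • (g.map v).sum
      = ∑ k ∈ Finset.range g.length, (g.map p).prod • v (g.getD k []) := by
    intro g
    rw [sum_map_eq_range, Finset.smul_sum]
  simp only [hL, hR]
  rw [Finset.sum_sigma', Finset.sum_sigma']
  refine Finset.sum_bij'
    (fun x _ => ⟨((x.1.take x.2).flatten.length,
        (x.1.take x.2).flatten.length + (x.1.getD x.2 []).length),
        (x.1.take x.2, x.1.drop (x.2 + 1))⟩)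
    (fun y _ => ⟨y.2.1 ++ ((w.drop y.1.1).take (y.1.2 - y.1.1)) :: y.2.2, y.2.1.length⟩)
    ?_ ?_ ?_ ?_ ?_
  · rintro ⟨g, k⟩ h
    simp only [Finset.mem_sigma, mem_SegF, Finset.mem_range] at h
    obtain ⟨⟨hne, hw⟩, hk⟩ := h
    obtain ⟨a, s, b, rfl, rfl⟩ := exists_split g k hk
    have hs : 0 < s.length := List.length_pos_iff.mpr (hne s (by simp))
    have hw' : w = a.flatten ++ (s ++ b.flatten) := by rw [← hw]; simp
    have hi : (a ++ s :: b).getD a.length [] = s := by simp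
    have ht : (a ++ s :: b).take a.length = a := by simp
    have hd : (a ++ s :: b).drop (a.length + 1) = b := by simp
    simp only [hi, ht, hd, Finset.mem_sigma, Finset.mem_filter, Finset.mem_product,
      Finset.mem_range, mem_SegF]
    have hlen : w.length = a.flatten.length + (s.length + b.flatten.length) := by
      rw [hw', List.length_append, List.length_append]
    refine ⟨⟨⟨by omega, by omega⟩, by omega⟩, ⟨fun t ht => hne t (by simp [ht]), ?_⟩,
      fun t ht => hne t (by simp [ht]), ?_⟩
    · rw [hw', List.take_left]
    · rw [hw', ← List.drop_drop, List.drop_left, List.drop_left]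
  · rintro ⟨⟨i, j⟩, a, b⟩ h
    simp only [Finset.mem_sigma, Finset.mem_filter, Finset.mem_product,
      Finset.mem_range, mem_SegF] at h ⊢
    obtain ⟨⟨⟨hi, hj⟩, hij⟩, ⟨ha, ha'⟩, hb, hb'⟩ := h
    refine ⟨⟨?_, ?_⟩, by simp⟩
    · intro t ht
      rw [List.mem_append, List.mem_cons] at ht
      rcases ht with ht | rfl | ht
      · exact ha t ht
      · apply List.ne_nil_of_length_pos
        rw [List.length_take, List.length_drop]
        omega
      · exact hb t ht
    · have : w.drop j = (w.drop i).drop (j - i) := by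
        rw [List.drop_drop]; congr 1; omega
      rw [List.flatten_append, List.flatten_cons, ha', hb', this, List.take_append_drop,
        List.take_append_drop]
  · rintro ⟨g, k⟩ h
    simp only [Finset.mem_sigma, mem_SegF, Finset.mem_range] at h
    obtain ⟨⟨hne, hw⟩, hk⟩ := h
    obtain ⟨a, s, b, rfl, rfl⟩ := exists_split g k hk
    have hw' : w = a.flatten ++ (s ++ b.flatten) := by rw [← hw]; simp
    have hi : (a ++ s :: b).getD a.length [] = s := by simp
    have ht : (a ++ s :: b).take a.length = a := by simp
    have hd : (a ++ s :: b).drop (a.length + 1) = b := by simp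
    simp only [hi, ht, hd]
    rw [hw', List.drop_left, Nat.add_sub_cancel_left, List.take_left]
  · rintro ⟨⟨i, j⟩, a, b⟩ h
    simp only [Finset.mem_sigma, Finset.mem_filter, Finset.mem_product,
      Finset.mem_range, mem_SegF] at h
    obtain ⟨⟨⟨hi, hj⟩, hij⟩, ⟨ha, ha'⟩, hb, hb'⟩ := h
    generalize hs : (w.drop i).take (j - i) = s
    have h1 : (a ++ s :: b).getD a.length [] = s := by simp
    have ht : (a ++ s :: b).take a.length = a := by simp
    have hd : (a ++ s :: b).drop (a.length + 1) = b := by simp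
    have hl1 : a.flatten.length = i := by rw [ha', List.length_take]; omega
    have hl2 : i + s.length = j := by
      rw [← hs, List.length_take, List.length_drop]; omega
    simp only [hs, h1, ht, hd, hl1, hl2]
  · rintro ⟨g, k⟩ h
    simp only [Finset.mem_sigma, mem_SegF, Finset.mem_range] at h
    obtain ⟨⟨hne, hw⟩, hk⟩ := h
    obtain ⟨a, s, b, rfl, rfl⟩ := exists_split g k hk
    have hw' : w = a.flatten ++ (s ++ b.flatten) := by rw [← hw]; simp
    have hi : (a ++ s :: b).getD a.length [] = s := by simp
    have ht : (a ++ s :: b).take a.length = a := by simp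
    have hd : (a ++ s :: b).drop (a.length + 1) = b := by simp
    simp only [hi, ht, hd]
    rw [hw', List.drop_left, Nat.add_sub_cancel_left, List.take_left]
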